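/- arXiv:2106.04394 — 2 statements merged into one kernel-verified Lean document; each statement's English description precedes it below -/
import Mathlib

section
/- Let 1 < p < ∞ and let q satisfy 1/p + 1/q = 1. For all x₁, x₂ ∈ L^p[0,1], one has 2^{1/p − 1} ‖x₁,x₂‖_p^H ≤ ‖x₁,x₂‖_p^G ≤ 2^{1/p} ‖x₁,x₂‖_p^H. -/
/-!
Write `x₁ ∧ x₂ = x₁ ⊗ x₂ - x₂ ⊗ x₁` on the square. Its `L^p` norm is `2^(1/p)` times the Gunawan
2-norm (`gunawan_eq`), so the claim reads `‖x₁ ∧ x₂‖ / 2 ≤ ‖x₁, x₂‖^G ≤ ‖x₁ ∧ x₂‖`.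

By Fubini the Gähler determinant is the pairing of `x₁ ∧ x₂` with `y₁ ⊗ y₂`, and
`‖y₁ ⊗ y₂‖_q = ‖y₁‖_q ‖y₂‖_q`; Hölder's inequality on the square gives the upper bound
(`abs_det_le`).

For the lower bound (`exists_wedge_le`), choose `y₂` in the unit ball of `L^q` norming `x₁`, and put
`z = ⟨x₂, y₂⟩ x₁ - ‖x₁‖ x₂`. For each `y₁` the determinant is `⟨z, y₁⟩`, so choosing `y₁` to norm
`z` makes it `‖z‖`. On the other hand `x₁ ∧ z = -‖x₁‖ (x₁ ∧ x₂)`, whence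
`‖x₁‖ ‖x₁ ∧ x₂‖ ≤ 2 ‖x₁‖ ‖z‖` by Minkowski's inequality.
-/

open MeasureTheory

/-- The `L^p` norm on `[0,1]`: `‖x‖_p = (∫₀¹ |x(t)|^p dt)^(1/p)`. -/
noncomputable def pnorm (p : ℝ) (x : ℝ → ℝ) : ℝ :=
  (∫ t in (0:ℝ)..1, |x t| ^ p) ^ (1 / p)

/-- `x ∈ L^p[0,1]`: `x` is measurable and `∫₀¹ |x(t)|^p dt < ∞`. -/
def MemLp01 (p : ℝ) (x : ℝ → ℝ) : Prop :=
  Measurable x ∧ IntervalIntegrable (fun t => |x t| ^ p) volume 0 1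

/-- The set of values `|det (∫₀¹ xᵢ(u) yⱼ(u) du)ⱼᵢ|` over `y₁, y₂ ∈ L^q[0,1]` with
`‖y₁‖_q ≤ 1`, `‖y₂‖_q ≤ 1`; its supremum is the Gähler 2-norm `‖x₁,x₂‖_p^G`. -/
noncomputable def GahlerSet (q : ℝ) (x₁ x₂ : ℝ → ℝ) : Set ℝ :=
  { r | ∃ y₁ y₂ : ℝ → ℝ, MemLp01 q y₁ ∧ MemLp01 q y₂ ∧
      pnorm q y₁ ≤ 1 ∧ pnorm q y₂ ≤ 1 ∧
      r = |(∫ u in (0:ℝ)..1, x₁ u * y₁ u) * (∫ u in (0:ℝ)..1, x₂ u * y₂ u) -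
           (∫ u in (0:ℝ)..1, x₂ u * y₁ u) * (∫ u in (0:ℝ)..1, x₁ u * y₂ u)| }

/-- The Gähler 2-norm `‖x₁,x₂‖_p^G` on `L^p[0,1]` (where `1/p + 1/q = 1`). -/
noncomputable def gahler (q : ℝ) (x₁ x₂ : ℝ → ℝ) : ℝ := sSup (GahlerSet q x₁ x₂)

/-- The Gunawan 2-norm
`‖x₁,x₂‖_p^H = ((1/2) ∫₀¹∫₀¹ |x₁(u)x₂(v) − x₁(v)x₂(u)|^p du dv)^(1/p)`. -/
noncomputable def gunawan (p : ℝ) (x₁ x₂ : ℝ → ℝ) : ℝ :=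
  ((1 / 2) * ∫ v in (0:ℝ)..1, ∫ u in (0:ℝ)..1,
    |x₁ u * x₂ v - x₁ v * x₂ u| ^ p) ^ (1 / p)

open ENNReal (ofReal)

section General

/-! ### `L^p` duality -/

lemma abs_tensor_rpow {α : Type*} {p : ℝ} (f g : α → ℝ) (z : α × α) :
    |f z.1 * g z.2| ^ p = |f z.1| ^ p * |g z.2| ^ p := by
  rw [abs_mul, Real.mul_rpow (abs_nonneg _) (abs_nonneg _)]

variable {α : Type*} [MeasurableSpace α] {μ : Measure α}

lemma lpNorm_ofReal_eq {p : ℝ} (hp : 0 < p) {f : α → ℝ} (hf : AEStronglyMeasurable f μ) :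
    lpNorm f (ofReal p) μ = (∫ t, |f t| ^ p ∂μ) ^ (1 / p) := by
  rw [lpNorm_eq_integral_norm_rpow_toReal (by simpa using hp) (by simp) hf,
    ENNReal.toReal_ofReal hp.le, one_div]
  simp only [Real.norm_eq_abs]

lemma memLp_ofReal_iff {p : ℝ} (hp : 0 < p) {f : α → ℝ} (hf : AEStronglyMeasurable f μ) :
    MemLp f (ofReal p) μ ↔ Integrable (fun t => |f t| ^ p) μ := by
  rw [← integrable_norm_rpow_iff hf (by simpa using hp) (by simp), ENNReal.toReal_ofReal hp.le]
  simp only [Real.norm_eq_abs]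

lemma integrable_mul_of_memLp {p q : ℝ} (hpq : p.HolderConjugate q) {f g : α → ℝ}
    (hf : MemLp f (ofReal p) μ) (hg : MemLp g (ofReal q) μ) :
    Integrable (fun t => f t * g t) μ := by
  have := hpq.ennrealOfReal
  exact hf.integrable_mul hg

lemma abs_integral_mul_le {p q : ℝ} (hpq : p.HolderConjugate q) {f g : α → ℝ}
    (hf : MemLp f (ofReal p) μ) (hg : MemLp g (ofReal q) μ) :
    |∫ t, f t * g t ∂μ| ≤ lpNorm f (ofReal p) μ * lpNorm g (ofReal q) μ := by
  rw [lpNorm_ofReal_eq hpq.pos hf.1, lpNorm_ofReal_eq hpq.symm.pos hg.1]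
  refine abs_integral_le_integral_abs.trans ?_
  simpa only [Real.norm_eq_abs, abs_mul] using integral_mul_norm_le_Lp_mul_Lq hpq hf hg

/-- Attainment of the dual description of the `L^p` norm: the function
`y = f |f|^(p-2) / (∫ |f|^p)^(1/q)` lies in the unit ball of `L^q` and norms `f`. -/
lemma exists_norming {p q : ℝ} (hpq : p.HolderConjugate q) {f : α → ℝ} (hfm : Measurable f)
    (hf : MemLp f (ofReal p) μ) :
    ∃ y : α → ℝ, Measurable y ∧ MemLp y (ofReal q) μ ∧ lpNorm y (ofReal q) μ ≤ 1 ∧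
      ∫ t, f t * y t ∂μ = lpNorm f (ofReal p) μ := by
  have hp := hpq.pos
  have hq := hpq.symm.pos
  have hint := (memLp_ofReal_iff hp hf.1).1 hf
  rw [lpNorm_ofReal_eq hp hf.1]
  have hI0 : 0 ≤ ∫ t, |f t| ^ p ∂μ := integral_nonneg fun t => by positivity
  set I := ∫ t, |f t| ^ p ∂μ with hI
  rcases hI0.eq_or_lt with h0 | hpos
  · refine ⟨0, measurable_const, MemLp.zero, by simp, ?_⟩
    rw [← h0, Real.zero_rpow (by positivity)]
    simp
  set y : α → ℝ := fun t => f t * |f t| ^ (p - 2) * I ^ (-(1 / q)) with hy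
  have hym : Measurable y := by fun_prop
  have hyq : ∀ t, |y t| ^ q = |f t| ^ p * I⁻¹ := by
    intro t
    have habs : |y t| = |f t| ^ (p - 1) * I ^ (-(1 / q)) := by
      rcases eq_or_ne (f t) 0 with h | h
      · simp [hy, h, Real.zero_rpow hpq.sub_one_pos.ne']
      · have h' : 0 < |f t| := abs_pos.2 h
        rw [hy]
        simp only [abs_mul]
        rw [abs_of_nonneg (Real.rpow_nonneg h'.le _), abs_of_nonneg (Real.rpow_nonneg hI0 _),
          show p - 1 = 1 + (p - 2) by ring, Real.rpow_add h', Real.rpow_one]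
    rw [habs, Real.mul_rpow (by positivity) (by positivity), ← Real.rpow_mul (abs_nonneg _),
      ← Real.rpow_mul hI0, hpq.sub_one_mul_conj, ← Real.rpow_neg_one]
    congr 2
    field_simp
  have hfy : ∀ t, f t * y t = |f t| ^ p * I ^ (-(1 / q)) := by
    intro t
    rcases eq_or_ne (f t) 0 with h | h
    · simp [h, Real.zero_rpow hp.ne']
    · have h' : 0 < |f t| := abs_pos.2 h
      rw [show p = 2 + (p - 2) by ring, Real.rpow_add h', hy]
      simp only [Real.rpow_two, sq_abs]
      ring_nf
  refine ⟨y, hym, ?_, ?_, ?_⟩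
  · rw [memLp_ofReal_iff hq hym.aestronglyMeasurable]
    simp only [hyq]
    exact hint.mul_const _
  · rw [lpNorm_ofReal_eq hq hym.aestronglyMeasurable]
    simp only [hyq]
    rw [integral_mul_const, ← hI, mul_inv_cancel₀ hpos.ne', Real.one_rpow]
  · simp only [hfy]
    rw [integral_mul_const, ← hI]
    nth_rewrite 1 [← Real.rpow_one I]
    rw [← Real.rpow_add hpos]
    congr 1
    have := hpq.inv_add_inv_eq_one
    rw [one_div, one_div]
    linarith

/-! ### Tensors and wedges on the product space -/

lemma memLp_tensor {p : ℝ} (hp : 0 < p) {f g : α → ℝ}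
    (hf : MemLp f (ofReal p) μ) (hg : MemLp g (ofReal p) μ) :
    MemLp (fun z : α × α => f z.1 * g z.2) (ofReal p) (μ.prod μ) := by
  have hm : AEStronglyMeasurable (fun z : α × α => f z.1 * g z.2) (μ.prod μ) :=
    hf.1.comp_fst.mul hg.1.comp_snd
  rw [memLp_ofReal_iff hp hm]
  simp only [abs_tensor_rpow]
  exact ((memLp_ofReal_iff hp hf.1).1 hf).mul_prod ((memLp_ofReal_iff hp hg.1).1 hg)

variable [SFinite μ]

lemma lpNorm_tensor {p : ℝ} (hp : 0 < p) {f g : α → ℝ}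
    (hf : MemLp f (ofReal p) μ) (hg : MemLp g (ofReal p) μ) :
    lpNorm (fun z : α × α => f z.1 * g z.2) (ofReal p) (μ.prod μ) =
      lpNorm f (ofReal p) μ * lpNorm g (ofReal p) μ := by
  rw [lpNorm_ofReal_eq hp (memLp_tensor hp hf hg).1, lpNorm_ofReal_eq hp hf.1,
    lpNorm_ofReal_eq hp hg.1]
  simp only [abs_tensor_rpow]
  rw [integral_prod_mul (fun t => |f t| ^ p) (fun t => |g t| ^ p),
    Real.mul_rpow (integral_nonneg fun t => by positivity)
      (integral_nonneg fun t => by positivity)]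

/-- The antisymmetric tensor `x₁ ⊗ x₂ - x₂ ⊗ x₁`. -/
def wedge (x₁ x₂ : α → ℝ) : α × α → ℝ :=
  (fun z => x₁ z.1 * x₂ z.2) - (fun z => x₂ z.1 * x₁ z.2)

lemma memLp_wedge {p : ℝ} (hp : 0 < p) {f g : α → ℝ}
    (hf : MemLp f (ofReal p) μ) (hg : MemLp g (ofReal p) μ) :
    MemLp (wedge f g) (ofReal p) (μ.prod μ) :=
  (memLp_tensor hp hf hg).sub (memLp_tensor hp hg hf)

lemma lpNorm_wedge_le {p : ℝ} (hp : 1 ≤ p) {f g : α → ℝ}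
    (hf : MemLp f (ofReal p) μ) (hg : MemLp g (ofReal p) μ) :
    lpNorm (wedge f g) (ofReal p) (μ.prod μ) ≤
      2 * (lpNorm f (ofReal p) μ * lpNorm g (ofReal p) μ) := by
  have hp0 : 0 < p := by linarith
  refine (lpNorm_sub_le (memLp_tensor hp0 hf hg) (by simpa using hp)).trans ?_
  rw [lpNorm_tensor hp0 hf hg, lpNorm_tensor hp0 hg hf]
  linarith

/-- The Gähler determinant is the pairing of `x₁ ∧ x₂` with `y₁ ⊗ y₂`. -/
lemma integral_wedge_mul {p q : ℝ} (hpq : p.HolderConjugate q) {x₁ x₂ y₁ y₂ : α → ℝ}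
    (hx₁ : MemLp x₁ (ofReal p) μ) (hx₂ : MemLp x₂ (ofReal p) μ)
    (hy₁ : MemLp y₁ (ofReal q) μ) (hy₂ : MemLp y₂ (ofReal q) μ) :
    ∫ z, wedge x₁ x₂ z * (y₁ z.1 * y₂ z.2) ∂(μ.prod μ) =
      (∫ u, x₁ u * y₁ u ∂μ) * (∫ u, x₂ u * y₂ u ∂μ) -
        (∫ u, x₂ u * y₁ u ∂μ) * (∫ u, x₁ u * y₂ u ∂μ) := by
  rw [← integral_prod_mul (fun u => x₁ u * y₁ u) (fun u => x₂ u * y₂ u),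
    ← integral_prod_mul (fun u => x₂ u * y₁ u) (fun u => x₁ u * y₂ u), ← integral_sub]
  · congr 1
    ext z
    simp only [wedge, Pi.sub_apply]
    ring
  · exact (integrable_mul_of_memLp hpq hx₁ hy₁).mul_prod (integrable_mul_of_memLp hpq hx₂ hy₂)
  · exact (integrable_mul_of_memLp hpq hx₂ hy₁).mul_prod (integrable_mul_of_memLp hpq hx₁ hy₂)

lemma abs_det_le {p q : ℝ} (hpq : p.HolderConjugate q) {x₁ x₂ y₁ y₂ : α → ℝ}
    (hx₁ : MemLp x₁ (ofReal p) μ) (hx₂ : MemLp x₂ (ofReal p) μ)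
    (hy₁ : MemLp y₁ (ofReal q) μ) (hy₂ : MemLp y₂ (ofReal q) μ)
    (hn₁ : lpNorm y₁ (ofReal q) μ ≤ 1) (hn₂ : lpNorm y₂ (ofReal q) μ ≤ 1) :
    |(∫ u, x₁ u * y₁ u ∂μ) * (∫ u, x₂ u * y₂ u ∂μ) -
        (∫ u, x₂ u * y₁ u ∂μ) * (∫ u, x₁ u * y₂ u ∂μ)| ≤
      lpNorm (wedge x₁ x₂) (ofReal p) (μ.prod μ) := by
  rw [← integral_wedge_mul hpq hx₁ hx₂ hy₁ hy₂]
  refine (abs_integral_mul_le hpq (memLp_wedge hpq.pos hx₁ hx₂)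
    (memLp_tensor hpq.symm.pos hy₁ hy₂)).trans ?_
  rw [lpNorm_tensor hpq.symm.pos hy₁ hy₂]
  exact mul_le_of_le_one_right lpNorm_nonneg (mul_le_one₀ hn₁ lpNorm_nonneg hn₂)

/-- The lower estimate, with the two test functions made explicit: `y₂` norms `x₁`, and `y₁` norms
`z = ⟨x₂, y₂⟩ x₁ - ‖x₁‖ x₂`, so that the determinant equals `‖z‖`. Since
`x₁ ∧ z = -‖x₁‖ (x₁ ∧ x₂)`, the triangle inequality gives `‖x₁‖ ‖x₁ ∧ x₂‖ ≤ 2 ‖x₁‖ ‖z‖`. -/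
lemma exists_wedge_le {p q : ℝ} (hpq : p.HolderConjugate q) {x₁ x₂ : α → ℝ}
    (hm₁ : Measurable x₁) (hm₂ : Measurable x₂)
    (hx₁ : MemLp x₁ (ofReal p) μ) (hx₂ : MemLp x₂ (ofReal p) μ) :
    ∃ y₁ y₂ : α → ℝ, Measurable y₁ ∧ Measurable y₂ ∧ MemLp y₁ (ofReal q) μ ∧
      MemLp y₂ (ofReal q) μ ∧ lpNorm y₁ (ofReal q) μ ≤ 1 ∧ lpNorm y₂ (ofReal q) μ ≤ 1 ∧
      lpNorm (wedge x₁ x₂) (ofReal p) (μ.prod μ) ≤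
        2 * |(∫ u, x₁ u * y₁ u ∂μ) * (∫ u, x₂ u * y₂ u ∂μ) -
          (∫ u, x₂ u * y₁ u ∂μ) * (∫ u, x₁ u * y₂ u ∂μ)| := by
  obtain ⟨y₂, hy₂m, hy₂, hn₂, he₂⟩ := exists_norming hpq hm₁ hx₁
  set a := ∫ u, x₂ u * y₂ u ∂μ with ha
  set N := lpNorm x₁ (ofReal p) μ with hN
  set z : α → ℝ := fun t => a * x₁ t - N * x₂ t with hz
  have hzm : Measurable z := by fun_prop
  have hzp : MemLp z (ofReal p) μ := (hx₁.const_mul a).sub (hx₂.const_mul N)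
  obtain ⟨y₁, hy₁m, hy₁, hn₁, he₁⟩ := exists_norming hpq hzm hzp
  refine ⟨y₁, y₂, hy₁m, hy₂m, hy₁, hy₂, hn₁, hn₂, ?_⟩
  have hdet : (∫ u, x₁ u * y₁ u ∂μ) * a - (∫ u, x₂ u * y₁ u ∂μ) * (∫ u, x₁ u * y₂ u ∂μ) =
      lpNorm z (ofReal p) μ := by
    rw [he₂, ← he₁, mul_comm _ a, mul_comm _ N, ← integral_const_mul, ← integral_const_mul,
      ← integral_sub ((integrable_mul_of_memLp hpq hx₁ hy₁).const_mul a)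
        ((integrable_mul_of_memLp hpq hx₂ hy₁).const_mul N)]
    congr 1
    ext t
    simp only [hz]
    ring
  rw [hdet, abs_of_nonneg lpNorm_nonneg]
  have hN0 : 0 ≤ N := lpNorm_nonneg
  rcases hN0.eq_or_lt with h0 | hpos
  · have h := lpNorm_wedge_le hpq.lt.le hx₁ hx₂
    rw [← hN, ← h0, zero_mul, mul_zero] at h
    exact h.trans (mul_nonneg zero_le_two lpNorm_nonneg)
  · have hw : wedge x₁ z = (-N) • wedge x₁ x₂ := by
      ext t
      simp only [wedge, hz, Pi.sub_apply, Pi.smul_apply, smul_eq_mul]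
      ring
    have h := lpNorm_wedge_le hpq.lt.le hx₁ hzp
    rw [hw, lpNorm_const_smul, coe_nnnorm, norm_neg, Real.norm_of_nonneg hN0, ← hN] at h
    refine le_of_mul_le_mul_left ?_ hpos
    linarith

end General

/-! ### The interval `[0,1]` -/

/-- Lebesgue measure on `(0,1]`, the measure behind `∫ u in (0:ℝ)..1`. -/
noncomputable abbrev unitMeasure : Measure ℝ := volume.restrict (Set.Ioc (0 : ℝ) 1)

lemma intervalIntegral_unit (f : ℝ → ℝ) : ∫ u in (0:ℝ)..1, f u = ∫ u, f u ∂unitMeasure :=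
  intervalIntegral.integral_of_le zero_le_one

lemma memLp01_iff {p : ℝ} (hp : 0 < p) {x : ℝ → ℝ} :
    MemLp01 p x ↔ Measurable x ∧ MemLp x (ofReal p) unitMeasure := by
  refine and_congr_right fun hx => ?_
  rw [memLp_ofReal_iff hp hx.aestronglyMeasurable,
    intervalIntegrable_iff_integrableOn_Ioc_of_le zero_le_one]
  rfl

lemma pnorm_eq {p : ℝ} (hp : 0 < p) {x : ℝ → ℝ} (hx : Measurable x) :
    pnorm p x = lpNorm x (ofReal p) unitMeasure := by
  rw [lpNorm_ofReal_eq hp hx.aestronglyMeasurable, pnorm, intervalIntegral_unit]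

lemma gunawan_eq {p : ℝ} (hp : 0 < p) {x₁ x₂ : ℝ → ℝ}
    (h₁ : MemLp x₁ (ofReal p) unitMeasure) (h₂ : MemLp x₂ (ofReal p) unitMeasure) :
    (2:ℝ) ^ (1 / p) * gunawan p x₁ x₂ =
      lpNorm (wedge x₁ x₂) (ofReal p) (unitMeasure.prod unitMeasure) := by
  have hw := memLp_wedge hp h₁ h₂
  have hI : 0 ≤ ∫ z, |wedge x₁ x₂ z| ^ p ∂(unitMeasure.prod unitMeasure) :=
    integral_nonneg fun z => by positivity
  have key : (∫ v in (0:ℝ)..1, ∫ u in (0:ℝ)..1, |x₁ u * x₂ v - x₁ v * x₂ u| ^ p) =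
      ∫ z, |wedge x₁ x₂ z| ^ p ∂(unitMeasure.prod unitMeasure) := by
    simp only [intervalIntegral_unit]
    rw [integral_prod _ ((memLp_ofReal_iff hp hw.1).1 hw)]
    congr 1
    ext v
    congr 1
    ext u
    -- Swapping `u` and `v` changes the sign of the wedge, which the absolute value absorbs.
    simp only [wedge, Pi.sub_apply]
    rw [abs_sub_comm, mul_comm (x₁ u)]
  rw [lpNorm_ofReal_eq hp hw.1, gunawan, key, ← Real.mul_rpow zero_le_two (by positivity)]
  congr 1
  ring

/-- for `1 < p < ∞`, `1/p + 1/q = 1`, and all `x₁, x₂ ∈ L^p[0,1]`,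
`2^(1/p − 1) ‖x₁,x₂‖_p^H ≤ ‖x₁,x₂‖_p^G ≤ 2^(1/p) ‖x₁,x₂‖_p^H`. -/
theorem stmt9 (p q : ℝ) (hp : 1 < p) (hpq : 1 / p + 1 / q = 1)
    (x₁ x₂ : ℝ → ℝ) (h₁ : MemLp01 p x₁) (h₂ : MemLp01 p x₂) :
    (2:ℝ) ^ (1 / p - 1) * gunawan p x₁ x₂ ≤ gahler q x₁ x₂ ∧
    gahler q x₁ x₂ ≤ (2:ℝ) ^ (1 / p) * gunawan p x₁ x₂ := by
  have hp0 : 0 < p := by linarith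
  have hpq' : p.HolderConjugate q :=
    Real.holderConjugate_iff.2 ⟨hp, by simpa only [one_div] using hpq⟩
  have hq0 : 0 < q := hpq'.symm.pos
  obtain ⟨hm₁, hx₁⟩ := (memLp01_iff hp0).1 h₁
  obtain ⟨hm₂, hx₂⟩ := (memLp01_iff hp0).1 h₂
  have hG := gunawan_eq hp0 hx₁ hx₂
  have hub : ∀ r ∈ GahlerSet q x₁ x₂, r ≤ (2:ℝ) ^ (1 / p) * gunawan p x₁ x₂ := by
    rintro r ⟨y₁, y₂, hy₁, hy₂, hn₁, hn₂, rfl⟩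
    obtain ⟨hym₁, hyq₁⟩ := (memLp01_iff hq0).1 hy₁
    obtain ⟨hym₂, hyq₂⟩ := (memLp01_iff hq0).1 hy₂
    rw [pnorm_eq hq0 hym₁] at hn₁
    rw [pnorm_eq hq0 hym₂] at hn₂
    simp only [intervalIntegral_unit]
    rw [hG]
    exact abs_det_le hpq' hx₁ hx₂ hyq₁ hyq₂ hn₁ hn₂
  obtain ⟨y₁, y₂, hym₁, hym₂, hyq₁, hyq₂, hn₁, hn₂, hle⟩ := exists_wedge_le hpq' hm₁ hm₂ hx₁ hx₂
  rw [← pnorm_eq hq0 hym₁] at hn₁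
  rw [← pnorm_eq hq0 hym₂] at hn₂
  simp only [← intervalIntegral_unit] at hle
  have hmem : |(∫ u in (0:ℝ)..1, x₁ u * y₁ u) * (∫ u in (0:ℝ)..1, x₂ u * y₂ u) -
      (∫ u in (0:ℝ)..1, x₂ u * y₁ u) * (∫ u in (0:ℝ)..1, x₁ u * y₂ u)| ∈ GahlerSet q x₁ x₂ :=
    ⟨y₁, y₂, (memLp01_iff hq0).2 ⟨hym₁, hyq₁⟩, (memLp01_iff hq0).2 ⟨hym₂, hyq₂⟩, hn₁, hn₂, rfl⟩
  constructor
  · have hsup := le_csSup ⟨_, hub⟩ hmem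
    rw [← hG] at hle
    rw [Real.rpow_sub zero_lt_two, Real.rpow_one, div_mul_eq_mul_div, gahler]
    linarith
  · exact csSup_le ⟨_, hmem⟩ hub
end

section
/- Let 1 < p < ∞ and let q satisfy 1/p + 1/q = 1. Let f : L^p[0,1] × L^p[0,1] → ℝ be a bilinear, antisymmetric 2-functional (f(x,y) = −f(y,x)) and K ≥ 0 a constant such that |f(x,y)| ≤ K ‖x‖_p ‖y‖_p for all x, y ∈ L^p[0,1]. Then |f(x,y)| ≤ K ‖x,y‖_p^G for all x, y ∈ L^p[0,1]. -/
/-!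
Antisymmetry gives `f x x = 0`, so `f x y = f x u` with `u = y + t • x` for every real `t`, and
determinants `det (∫ xᵢ yⱼ)` are unchanged by the same replacement. Let `g` be a norming functional
of `x`: `‖g‖_q ≤ 1` and `∫ x g = ‖x‖_p`, given explicitly by the equality case of Hölder's
inequality (`exists_norming`). Choose `t` with `∫ u g = 0`, and let `h` be a norming functional
of `u`. Then the determinant of `(x, u)` against `(g, h)` is triangular, with value
`‖x‖_p ‖u‖_p`, hence
`|f x y| = |f x u| ≤ K ‖x‖_p ‖u‖_p = K det ≤ K ‖x, y‖_p^G`.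
The last step needs the set defining the supremum to be bounded, which follows from Young's
inequality (`bddAbove_gahlerSet`). If `x` or `u` has norm `0`, the hypothesis on `f` already gives
`f x y = 0`.
-/

open MeasureTheory

/-- `f` is a bilinear 2-functional on `L^p[0,1] × L^p[0,1]` (linear in each argument,
with respect to pointwise operations on functions). -/
def Bilinear01 (p : ℝ) (f : (ℝ → ℝ) → (ℝ → ℝ) → ℝ) : Prop :=
  (∀ x x' y, MemLp01 p x → MemLp01 p x' → MemLp01 p y →
      f (x + x') y = f x y + f x' y) ∧
  (∀ (a : ℝ) (x y : ℝ → ℝ), MemLp01 p x → MemLp01 p y → f (a • x) y = a * f x y) ∧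
  (∀ x y y', MemLp01 p x → MemLp01 p y → MemLp01 p y' →
      f x (y + y') = f x y + f x y') ∧
  (∀ (a : ℝ) (x y : ℝ → ℝ), MemLp01 p x → MemLp01 p y → f x (a • y) = a * f x y)

lemma MemLp01.smul {p : ℝ} {x : ℝ → ℝ} (hx : MemLp01 p x) (a : ℝ) : MemLp01 p (a • x) := by
  refine ⟨hx.1.const_smul a, ?_⟩
  have : (fun t => |(a • x) t| ^ p) = fun t => |a| ^ p * |x t| ^ p := by
    funext t
    rw [Pi.smul_apply, smul_eq_mul, abs_mul, Real.mul_rpow (abs_nonneg _) (abs_nonneg _)]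
  rw [this]
  exact hx.2.const_mul _

lemma MemLp01.add {p : ℝ} (hp : 1 < p) {x y : ℝ → ℝ} (hx : MemLp01 p x) (hy : MemLp01 p y) :
    MemLp01 p (x + y) := by
  have hm : Measurable (x + y) := hx.1.add hy.1
  refine ⟨hm, ((hx.2.add hy.2).const_mul ((2:ℝ) ^ (p - 1))).mono_fun ?_ ?_⟩
  · exact (hm.abs.pow_const p).aestronglyMeasurable
  · refine Filter.Eventually.of_forall fun t => ?_
    have h1 : |(x + y) t| ^ p ≤ (|x t| + |y t|) ^ p :=
      Real.rpow_le_rpow (abs_nonneg _) (abs_add_le _ _) (by linarith)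
    have h2 : (|x t| + |y t|) ^ p ≤ (2:ℝ) ^ (p - 1) * (|x t| ^ p + |y t| ^ p) :=
      mod_cast NNReal.rpow_add_le_mul_rpow_add_rpow ⟨|x t|, abs_nonneg _⟩ ⟨|y t|, abs_nonneg _⟩ hp.le
    beta_reduce
    rw [Real.norm_of_nonneg (by positivity)]
    exact (h1.trans h2).trans (le_abs_self _)

lemma young01 {p q : ℝ} (hpq : p.HolderConjugate q) {x y : ℝ → ℝ} (t : ℝ) :
    |x t * y t| ≤ |x t| ^ p / p + |y t| ^ q / q := by
  rw [abs_mul]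
  exact Real.young_inequality_of_nonneg (abs_nonneg _) (abs_nonneg _) hpq

lemma intervalIntegrable_mul01 {p q : ℝ} (hpq : p.HolderConjugate q) {x y : ℝ → ℝ}
    (hx : MemLp01 p x) (hy : MemLp01 q y) :
    IntervalIntegrable (fun t => x t * y t) volume 0 1 := by
  refine ((hx.2.div_const p).add (hy.2.div_const q)).mono_fun
    (hx.1.mul hy.1).aestronglyMeasurable (Filter.Eventually.of_forall fun t => ?_)
  exact (young01 hpq t).trans (le_abs_self _)

/-- A bound for `∫ x y`, uniform over the unit ball of `L^q`. -/
lemma abs_integral_mul_le01 {p q : ℝ} (hpq : p.HolderConjugate q) {x y : ℝ → ℝ}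
    (hx : MemLp01 p x) (hy : MemLp01 q y) (hn : pnorm q y ≤ 1) :
    |∫ t in (0:ℝ)..1, x t * y t| ≤ (∫ t in (0:ℝ)..1, |x t| ^ p) / p + 1 / q := by
  have hq : 0 < q := hpq.symm.pos
  have h1 : (∫ t in (0:ℝ)..1, |y t| ^ q) ≤ 1 := by
    have h0 : 0 ≤ ∫ t in (0:ℝ)..1, |y t| ^ q :=
      intervalIntegral.integral_nonneg zero_le_one fun t _ => by positivity
    unfold pnorm at hn
    by_contra! h
    exact absurd hn (not_le.2 (Real.one_lt_rpow h (by positivity)))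
  calc |∫ t in (0:ℝ)..1, x t * y t|
      ≤ ∫ t in (0:ℝ)..1, |x t * y t| :=
        intervalIntegral.abs_integral_le_integral_abs zero_le_one
    _ ≤ ∫ t in (0:ℝ)..1, (|x t| ^ p / p + |y t| ^ q / q) :=
        intervalIntegral.integral_mono zero_le_one (intervalIntegrable_mul01 hpq hx hy).abs
          ((hx.2.div_const p).add (hy.2.div_const q)) fun t => young01 hpq t
    _ = (∫ t in (0:ℝ)..1, |x t| ^ p) / p + (∫ t in (0:ℝ)..1, |y t| ^ q) / q := by
        rw [intervalIntegral.integral_add (hx.2.div_const p) (hy.2.div_const q),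
          intervalIntegral.integral_div, intervalIntegral.integral_div]
    _ ≤ _ := by gcongr

lemma bddAbove_gahlerSet {p q : ℝ} (hpq : p.HolderConjugate q) {x y : ℝ → ℝ}
    (hx : MemLp01 p x) (hy : MemLp01 p y) : BddAbove (GahlerSet q x y) := by
  set A := (∫ t in (0:ℝ)..1, |x t| ^ p) / p + 1 / q
  set B := (∫ t in (0:ℝ)..1, |y t| ^ p) / p + 1 / q
  refine ⟨A * B + B * A, ?_⟩
  rintro r ⟨g, h, hg, hh, hg1, hh1, rfl⟩
  have a1 := abs_integral_mul_le01 hpq hx hg hg1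
  have a2 := abs_integral_mul_le01 hpq hy hh hh1
  have a3 := abs_integral_mul_le01 hpq hy hg hg1
  have a4 := abs_integral_mul_le01 hpq hx hh hh1
  refine (abs_sub _ _).trans ?_
  rw [abs_mul, abs_mul]
  exact add_le_add
    (mul_le_mul a1 a2 (abs_nonneg _) ((abs_nonneg _).trans a1))
    (mul_le_mul a3 a4 (abs_nonneg _) ((abs_nonneg _).trans a3))

/-- Existence of a norming functional, by the equality case of Hölder's inequality: with
`I = ∫ |x|^p`, the function `I^(-1/q) · x · |x|^(p-2)` works. -/
lemma exists_norming_s12 {p q : ℝ} (hpq : p.HolderConjugate q) {x : ℝ → ℝ}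
    (hx : MemLp01 p x) (hpos : 0 < pnorm p x) :
    ∃ g, MemLp01 q g ∧ pnorm q g ≤ 1 ∧ ∫ t in (0:ℝ)..1, x t * g t = pnorm p x := by
  have hp : 1 < p := hpq.lt
  have hq : 0 < q := hpq.symm.pos
  set I := ∫ t in (0:ℝ)..1, |x t| ^ p with hI
  have hI0 : 0 < I := by
    have h0 : 0 ≤ I := intervalIntegral.integral_nonneg zero_le_one fun t _ => by positivity
    refine h0.lt_of_ne fun h => ?_
    have : pnorm p x = 0 := by
      rw [pnorm, ← hI, ← h]
      exact Real.zero_rpow (by positivity)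
    linarith
  have hmul : ∀ s : ℝ, |s| * |s| ^ (p - 2) = |s| ^ (p - 1) := fun s => by
    rcases eq_or_ne s 0 with rfl | hs
    · simp [Real.zero_rpow (sub_ne_zero.2 hp.ne')]
    · rw [← Real.rpow_one_add' (abs_nonneg s) (by linarith)]
      ring_nf
  have habs : ∀ t, |I ^ (-(1 / q)) * (x t * |x t| ^ (p - 2))| ^ q = I⁻¹ * |x t| ^ p := fun t => by
    have e : |I ^ (-(1 / q)) * (x t * |x t| ^ (p - 2))| = I ^ (-(1 / q)) * |x t| ^ (p - 1) := by
      rw [abs_mul, abs_mul, abs_of_nonneg (Real.rpow_nonneg hI0.le _),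
        abs_of_nonneg (Real.rpow_nonneg (abs_nonneg (x t)) _), hmul]
    rw [e, Real.mul_rpow (by positivity) (by positivity), ← Real.rpow_mul hI0.le,
      ← Real.rpow_mul (abs_nonneg _), hpq.sub_one_mul_conj, neg_mul,
      one_div_mul_cancel hq.ne', Real.rpow_neg_one]
  have hprod : ∀ t, x t * (I ^ (-(1 / q)) * (x t * |x t| ^ (p - 2))) =
      I ^ (-(1 / q)) * |x t| ^ p := fun t => by
    have e : |x t| * |x t| ^ (p - 1) = |x t| ^ p := by
      rw [← Real.rpow_one_add' (abs_nonneg _) (by linarith)]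
      ring_nf
    rw [← e, ← hmul]
    linear_combination -I ^ (-(1 / q)) * |x t| ^ (p - 2) * abs_mul_abs_self (x t)
  refine ⟨fun t => I ^ (-(1 / q)) * (x t * |x t| ^ (p - 2)), ⟨?_, ?_⟩, ?_, ?_⟩
  · exact (hx.1.mul (hx.1.abs.pow_const _)).const_mul _
  · simp only [habs]
    exact hx.2.const_mul _
  · simp only [pnorm, habs]
    rw [intervalIntegral.integral_const_mul, ← hI, inv_mul_cancel₀ hI0.ne', Real.one_rpow]
  · simp only [hprod]
    rw [intervalIntegral.integral_const_mul, ← hI, pnorm, ← hI]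
    nth_rewrite 2 [← Real.rpow_one I]
    rw [← Real.rpow_add hI0]
    congr 1
    have := hpq.inv_add_inv_eq_one
    simp only [one_div]
    linarith

lemma pnorm_nonneg (p : ℝ) (x : ℝ → ℝ) : 0 ≤ pnorm p x :=
  Real.rpow_nonneg (intervalIntegral.integral_nonneg zero_le_one fun t _ => by positivity) _

lemma gahler_nonneg (q : ℝ) (x y : ℝ → ℝ) : 0 ≤ gahler q x y := by
  refine Real.sSup_nonneg ?_
  rintro r ⟨g, h, -, -, -, -, rfl⟩
  exact abs_nonneg _

/-- for `1 < p < ∞`, `1/p + 1/q = 1`, if the bilinear 2-functional `f`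
is antisymmetric and satisfies `|f(x,y)| ≤ K ‖x‖_p ‖y‖_p`, then
`|f(x,y)| ≤ K ‖x,y‖_p^G` for all `x, y ∈ L^p[0,1]`. -/
theorem stmt12 (p q : ℝ) (hp : 1 < p) (hpq : 1 / p + 1 / q = 1)
    (f : (ℝ → ℝ) → (ℝ → ℝ) → ℝ) (hf : Bilinear01 p f)
    (hanti : ∀ x y, MemLp01 p x → MemLp01 p y → f x y = - f y x)
    (K : ℝ) (hK : 0 ≤ K)
    (hbound : ∀ x y, MemLp01 p x → MemLp01 p y → |f x y| ≤ K * pnorm p x * pnorm p y) :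
    ∀ x y, MemLp01 p x → MemLp01 p y → |f x y| ≤ K * gahler q x y := by
  intro x y hx hy
  have hc : p.HolderConjugate q :=
    (Real.holderConjugate_iff).2 ⟨hp, by simpa only [one_div] using hpq⟩
  have hG : 0 ≤ K * gahler q x y := mul_nonneg hK (gahler_nonneg q x y)
  rcases (pnorm_nonneg p x).eq_or_lt with h0 | hxpos
  · have h := hbound x y hx hy
    rw [← h0, mul_zero, zero_mul] at h
    exact h.trans hG
  obtain ⟨g, hg, hg1, hxg⟩ := exists_norming_s12 hc hx hxpos
  -- `t` is chosen so that `g` annihilates `u = y + t • x`.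
  set t : ℝ := -((∫ s in (0:ℝ)..1, y s * g s) / pnorm p x) with ht
  have htx : MemLp01 p (t • x) := hx.smul t
  have hu : MemLp01 p (y + t • x) := hy.add hp htx
  have hint : ∀ k, MemLp01 q k → ∫ s in (0:ℝ)..1, (y + t • x) s * k s =
      (∫ s in (0:ℝ)..1, y s * k s) + t * ∫ s in (0:ℝ)..1, x s * k s := fun k hk => by
    rw [← intervalIntegral.integral_const_mul, ← intervalIntegral.integral_add
      (intervalIntegrable_mul01 hc hy hk) ((intervalIntegrable_mul01 hc hx hk).const_mul t)]
    congr 1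
    funext s
    simp only [Pi.add_apply, Pi.smul_apply, smul_eq_mul]
    ring
  have hfu : f x (y + t • x) = f x y := by
    have hxx : f x x = 0 := by linarith [hanti x x hx hx]
    rw [hf.2.2.1 x y (t • x) hx hy htx, hf.2.2.2 t x x hx hx, hxx, mul_zero, add_zero]
  have hb := hbound x (y + t • x) hx hu
  rw [hfu] at hb
  rcases (pnorm_nonneg p (y + t • x)).eq_or_lt with h0 | hupos
  · rw [← h0, mul_zero] at hb
    exact hb.trans hG
  obtain ⟨h, hh, hh1, huh⟩ := exists_norming_s12 hc hu hupos
  have hdet : pnorm p x * pnorm p (y + t • x) =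
      (∫ s in (0:ℝ)..1, x s * g s) * (∫ s in (0:ℝ)..1, y s * h s) -
        (∫ s in (0:ℝ)..1, y s * g s) * (∫ s in (0:ℝ)..1, x s * h s) := by
    have hyg : t * pnorm p x = -∫ s in (0:ℝ)..1, y s * g s := by
      rw [ht]
      field_simp
    rw [← huh, hint h hh, hxg]
    linear_combination (∫ s in (0:ℝ)..1, x s * h s) * hyg
  have hle : pnorm p x * pnorm p (y + t • x) ≤ gahler q x y := by
    refine le_trans ?_ (le_csSup (bddAbove_gahlerSet hc hx hy)
      ⟨g, h, hg, hh, hg1, hh1, rfl⟩)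
    rw [hdet]
    exact le_abs_self _
  calc |f x y| ≤ K * (pnorm p x * pnorm p (y + t • x)) := by rwa [← mul_assoc]
    _ ≤ K * gahler q x y := mul_le_mul_of_nonneg_left hle hK
end
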